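/- (Second formula.) Let 1 ≤ k ≤ n, let χ be a function from the symmetric group S_n to ℂ, and let A, X^1, …, X^k ∈ M_n(ℂ). Then D^k d_χ(A)(X^1,…,X^k) = Σ_{σ∈S_k} Σ_{α,β∈Q_{k,n}} d_χ(X^σ_β[α|β] ⊕_{α|β} A(α|β)). In particular, D^k d_χ(A)(X,…,X) = k! · Σ_{α,β∈Q_{k,n}} d_χ(X[α|β] ⊕_{α|β} A(α|β)). -/

import Mathlib

open scoped Classical

attribute [local instance] Matrix.normedAddCommGroup Matrix.normedSpace

noncomputable section

/-- The immanant `d_χ(A) = ∑_{σ ∈ S_n} χ(σ) ∏_i a_{i σ(i)}`. -/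
def imm {n : ℕ} (χ : Equiv.Perm (Fin n) → ℂ) (A : Matrix (Fin n) (Fin n) ℂ) : ℂ :=
  ∑ σ : Equiv.Perm (Fin n), χ σ * ∏ i, A i (σ i)

/-- `A(i|j)`: replace row `i` and column `j` of `A` by zeros, except the `(i,j)` entry,
which is set to `1`. -/
def unitRowCol {n : ℕ} (A : Matrix (Fin n) (Fin n) ℂ) (i j : Fin n) :
    Matrix (Fin n) (Fin n) ℂ :=
  Matrix.of fun p q => if p = i then (if q = j then 1 else 0) else if q = j then 0 else A p q

/-- The immanantal adjoint: its `(i,j)` entry is `d_χ(A(i|j))`. -/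
def immAdj {n : ℕ} (χ : Equiv.Perm (Fin n) → ℂ) (A : Matrix (Fin n) (Fin n) ℂ) :
    Matrix (Fin n) (Fin n) ℂ :=
  Matrix.of fun i j => imm χ (unitRowCol A i j)

/-- `A(j;X)`: replace the `j`-th column of `A` by the `j`-th column of `X`. -/
def replCol {n : ℕ} (A X : Matrix (Fin n) (Fin n) ℂ) (j : Fin n) :
    Matrix (Fin n) (Fin n) ℂ :=
  Matrix.of fun p q => if q = j then X p q else A p q

/-- `Q_{k,n}`: the strictly increasing maps from `Fin k` to `Fin n`. -/
def Qset (k n : ℕ) : Finset (Fin k → Fin n) := Finset.univ.filter StrictMono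

/-- `A(α ; X^1, …, X^k)`: replace, for each `l`, the `α(l)`-th column of `A` by the
`α(l)`-th column of `X^l`. -/
def replCols {n k : ℕ} (A : Matrix (Fin n) (Fin n) ℂ) (α : Fin k → Fin n)
    (X : Fin k → Matrix (Fin n) (Fin n) ℂ) : Matrix (Fin n) (Fin n) ℂ :=
  Matrix.of fun p q => if h : ∃ l, α l = q then X (Classical.choose h) p q else A p q

/-- The mixed immanant `Δ_χ(Y^1, …, Y^n)`. -/
def mixedImm {n : ℕ} (χ : Equiv.Perm (Fin n) → ℂ)
    (Y : Fin n → Matrix (Fin n) (Fin n) ℂ) : ℂ :=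
  ((n.factorial : ℂ))⁻¹ * ∑ σ : Equiv.Perm (Fin n), imm χ (Matrix.of fun p q => Y (σ q) p q)

/-- The family `(A, …, A, X^1, …, X^k)` with `n - k` copies of `A`. -/
def padFam {n k : ℕ} (A : Matrix (Fin n) (Fin n) ℂ) (X : Fin k → Matrix (Fin n) (Fin n) ℂ) :
    Fin n → Matrix (Fin n) (Fin n) ℂ :=
  fun i => if h : (i : ℕ) < n - k then A else X ⟨(i : ℕ) - (n - k), by have := i.isLt; omega⟩

/-- The increasing enumeration `ᾱ` of the complement of the range of `α`. -/
def complEnum {n k : ℕ} (α : Fin k → Fin n) : Fin (n - k) → Fin n :=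
  if h : (Finset.univ.filter fun j => j ∉ Set.range α).card = n - k then
    (Finset.univ.filter fun j => j ∉ Set.range α).orderEmbOfFin h
  else fun i => ⟨0, by have := i.isLt; omega⟩

/-- `X(α|β)`: the submatrix obtained by deleting rows `α(1), …, α(k)` and columns
`β(1), …, β(k)`. -/
def delSub {n k : ℕ} (X : Matrix (Fin n) (Fin n) ℂ) (α β : Fin k → Fin n) :
    Matrix (Fin (n - k)) (Fin (n - k)) ℂ :=
  X.submatrix (complEnum α) (complEnum β)

/-- `A ⊕_{α|β} B`. -/
def dSum {n k : ℕ} (α β : Fin k → Fin n) (A : Matrix (Fin k) (Fin k) ℂ)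
    (B : Matrix (Fin (n - k)) (Fin (n - k)) ℂ) : Matrix (Fin n) (Fin n) ℂ :=
  Matrix.of fun i j =>
    if hi : ∃ p, α p = i then
      (if hj : ∃ q, β q = j then A (Classical.choose hi) (Classical.choose hj) else 0)
    else if _hj : ∃ q, β q = j then 0
    else if hi' : ∃ p, complEnum α p = i then
      (if hj' : ∃ q, complEnum β q = j then B (Classical.choose hi') (Classical.choose hj')
       else 0)
    else 0

/-- `X{α|β}`: zero out the entries `(i,j)` with `i ∈ Im α, j ∉ Im β` and those with
`i ∉ Im α, j ∈ Im β`. -/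
def maskM {n k : ℕ} (X : Matrix (Fin n) (Fin n) ℂ) (α β : Fin k → Fin n) :
    Matrix (Fin n) (Fin n) ℂ :=
  Matrix.of fun i j =>
    if ((∃ p, α p = i) ∧ ¬ (∃ q, β q = j)) ∨ (¬ (∃ p, α p = i) ∧ (∃ q, β q = j)) then 0
    else X i j

/-- `X^σ_β`: the matrix whose `β(p)`-th column is the `β(p)`-th column of `X^{σ(p)}`,
all other columns being zero. -/
def zRepl {n k : ℕ} (β : Fin k → Fin n) (σ : Equiv.Perm (Fin k))
    (X : Fin k → Matrix (Fin n) (Fin n) ℂ) : Matrix (Fin n) (Fin n) ℂ :=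
  Matrix.of fun p q => if h : ∃ l, β l = q then X (σ (Classical.choose h)) p q else 0

/-- `|α| = α(1) + ⋯ + α(k)` (with `1`-based values). -/
def wt {k n : ℕ} (α : Fin k → Fin n) : ℕ := ∑ l, ((α l : ℕ) + 1)

/-- The mixed discriminant `Δ(B^1, …, B^k)`. -/
def mixedDisc {k : ℕ} (B : Fin k → Matrix (Fin k) (Fin k) ℂ) : ℂ :=
  ((k.factorial : ℂ))⁻¹ * ∑ σ : Equiv.Perm (Fin k), (Matrix.of fun p q => B (σ q) p q).det

/-- `A{id|β}`: zero out the entries of the first `k` rows in the columns outside `Im β`,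
and the entries of the remaining rows in the columns of `Im β`. -/
def maskId {n k : ℕ} (A : Matrix (Fin n) (Fin n) ℂ) (β : Fin k → Fin n) :
    Matrix (Fin n) (Fin n) ℂ :=
  Matrix.of fun i j =>
    if ((i : ℕ) < k ∧ j ∉ Set.range β) ∨ (k ≤ (i : ℕ) ∧ j ∈ Set.range β) then 0 else A i j

/-- The `m`-th compound of an `n × n` matrix, with rows and columns indexed by `Q_{m,n}`. -/
def compound (m n : ℕ) (A : Matrix (Fin n) (Fin n) ℂ) :
    Matrix {α : Fin m → Fin n // StrictMono α} {α : Fin m → Fin n // StrictMono α} ℂ :=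
  Matrix.of fun α β => (A.submatrix α.1 β.1).det

end

/-- The derivatives of a single diagonal product `A ↦ ∏ i, A i (τ i)`. -/
lemma iteratedFDeriv_prod_apply_perm {n k : ℕ} (τ : Equiv.Perm (Fin n))
    (A : Matrix (Fin n) (Fin n) ℂ) (X : Fin k → Matrix (Fin n) (Fin n) ℂ) :
    iteratedFDeriv ℂ k (fun M : Matrix (Fin n) (Fin n) ℂ => ∏ i, M i (τ i)) A X =
      ∑ e : Fin k ↪ Fin n, ∏ i, replCols A e X i (τ i) := by
  let L : Matrix (Fin n) (Fin n) ℂ →L[ℂ] (Fin n → ℂ) :=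
    LinearMap.toContinuousLinearMap
      { toFun := fun M j => M (τ.symm j) j
        map_add' := fun _ _ => rfl
        map_smul' := fun _ _ => rfl }
  have hL (M : Matrix (Fin n) (Fin n) ℂ) (j : Fin n) : L M j = M (τ.symm j) j := rfl
  let P := ContinuousMultilinearMap.mkPiAlgebra ℂ (Fin n) ℂ
  have hP : (fun M : Matrix (Fin n) (Fin n) ℂ => ∏ i, M i (τ i)) = P ∘ L := by
    funext M
    simp only [P, Function.comp_apply, ContinuousMultilinearMap.mkPiAlgebra_apply, hL]
    exact Fintype.prod_equiv τ _ _ fun i => by simp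
  rw [hP]
  refine (DFunLike.congr_fun
    (L.iteratedFDeriv_comp_right (P.contDiff (n := k)) A le_rfl) X).trans ?_
  change iteratedFDeriv ℂ k P (L A) (fun l => L (X l)) = _
  rw [ContinuousMultilinearMap.iteratedFDeriv_eq, ContinuousMultilinearMap.iteratedFDeriv,
    sum_apply]
  refine Finset.sum_congr rfl fun e _ => ?_
  rw [ContinuousMultilinearMap.iteratedFDerivComponent_apply,
    ContinuousMultilinearMap.mkPiAlgebra_apply]
  refine (Fintype.prod_equiv τ _ _ fun i => ?_).symm
  by_cases h : ∃ l, e l = τ i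
  · have hm : τ i ∈ Set.range e := h
    simp only [replCols, Matrix.of_apply, dif_pos h, dif_pos hm, hL, Equiv.symm_apply_apply]
    refine congrArg (fun l => X l i (τ i)) ?_
    rw [Equiv.eq_symm_apply]
    exact Subtype.ext (Classical.choose_spec h)
  · have hm : τ i ∉ Set.range e := h
    simp only [replCols, Matrix.of_apply, dif_neg h, dif_neg hm, hL, Pi.compRightL_apply,
      Equiv.symm_apply_apply]

lemma iteratedFDeriv_imm {n k : ℕ} (χ : Equiv.Perm (Fin n) → ℂ)
    (A : Matrix (Fin n) (Fin n) ℂ) (X : Fin k → Matrix (Fin n) (Fin n) ℂ) :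
    iteratedFDeriv ℂ k (imm χ) A X = ∑ e : Fin k ↪ Fin n, imm χ (replCols A e X) := by
  have hprod (τ : Equiv.Perm (Fin n)) :
      ContDiff ℂ k (fun M : Matrix (Fin n) (Fin n) ℂ => ∏ i, M i (τ i)) :=
    contDiff_prod fun i _ => contDiff_apply_apply ℂ ℂ i (τ i)
  have himm : imm χ = fun M => ∑ τ : Equiv.Perm (Fin n), χ τ • ∏ i, M i (τ i) := rfl
  rw [himm, iteratedFDeriv_fun_sum_apply fun τ _ => ((hprod τ).const_smul (χ τ)).contDiffAt,
    sum_apply, Finset.sum_comm]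
  refine Finset.sum_congr rfl fun τ _ => ?_
  rw [iteratedFDeriv_const_smul_apply' (hprod τ).contDiffAt, smul_apply,
    iteratedFDeriv_prod_apply_perm, Finset.smul_sum]

lemma exists_perm_strictMono_comp {n k : ℕ} {f : Fin k → Fin n} (hf : Function.Injective f) :
    ∃ σ : Equiv.Perm (Fin k), StrictMono (f ∘ σ) :=
  ⟨Tuple.sort f, (Tuple.monotone_sort f).strictMono_of_injective
    (hf.comp (Tuple.sort f).injective)⟩

lemma mem_Qset {n k : ℕ} {α : Fin k → Fin n} : α ∈ Qset k n ↔ StrictMono α := by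
  simp [Qset]

/-- Each injection factors uniquely as a strictly increasing map after a permutation. -/
lemma sum_embedding_eq_sum_perm_Qset {n k : ℕ} (F : (Fin k → Fin n) → ℂ) :
    ∑ e : Fin k ↪ Fin n, F e =
      ∑ σ : Equiv.Perm (Fin k), ∑ β ∈ Qset k n, F (β ∘ σ.symm) := by
  rw [← Finset.sum_product']
  symm
  refine Finset.sum_bij
    (fun x hx => ⟨x.2 ∘ x.1.symm,
      (mem_Qset.1 (Finset.mem_product.1 hx).2).injective.comp x.1.symm.injective⟩)
    (fun _ _ => Finset.mem_univ _) ?_ ?_ (fun _ _ => rfl)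
  · rintro ⟨σ, β⟩ hx ⟨σ', β'⟩ hy h
    have hβ := mem_Qset.1 (Finset.mem_product.1 hx).2
    have hβ' := mem_Qset.1 (Finset.mem_product.1 hy).2
    have h' : β ∘ σ.symm = β' ∘ σ'.symm := congrArg DFunLike.coe h
    have hr : β = β' := by
      rw [← hβ.range_inj hβ', ← σ.symm.surjective.range_comp β, h',
        σ'.symm.surjective.range_comp]
    subst hr
    have hσ : σ.symm = σ'.symm := Equiv.ext fun i => hβ.injective (congrFun h' i)
    rw [Equiv.symm_bijective.injective hσ]
  · intro e _
    obtain ⟨σ, hσ⟩ := exists_perm_strictMono_comp e.injective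
    exact ⟨(σ, e ∘ σ), Finset.mem_product.2 ⟨Finset.mem_univ _, mem_Qset.2 hσ⟩, by ext; simp⟩

lemma replCols_comp_perm {n k : ℕ} (A : Matrix (Fin n) (Fin n) ℂ) {β : Fin k → Fin n}
    (hβ : Function.Injective β) (σ : Equiv.Perm (Fin k))
    (X : Fin k → Matrix (Fin n) (Fin n) ℂ) :
    replCols A (β ∘ σ.symm) X = replCols A β (X ∘ σ) := by
  ext p q
  by_cases h : ∃ l, β l = q
  · have h' : ∃ l, (β ∘ σ.symm) l = q := h.imp' σ fun l hl => by simpa using hl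
    have hc : Classical.choose h' = σ (Classical.choose h) := by
      rw [← Equiv.symm_apply_eq]
      exact hβ ((Classical.choose_spec h').trans (Classical.choose_spec h).symm)
    rw [replCols, replCols, Matrix.of_apply, Matrix.of_apply, dif_pos h, dif_pos h', hc,
      Function.comp_apply]
  · have h' : ¬ ∃ l, (β ∘ σ.symm) l = q := fun ⟨l, hl⟩ => h ⟨_, hl⟩
    simp only [replCols, Matrix.of_apply, dif_neg h, dif_neg h']

lemma range_complEnum {n k : ℕ} {α : Fin k → Fin n} (hα : Function.Injective α) :
    Set.range (complEnum α) = (Set.range α)ᶜ := by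
  have hs : (Finset.univ.filter fun j => j ∉ Set.range α) = (Finset.univ.image α)ᶜ := by
    ext j
    simp
  have hc : (Finset.univ.filter fun j => j ∉ Set.range α).card = n - k := by
    rw [hs, Finset.card_compl, Finset.card_image_of_injective _ hα]
    simp
  rw [complEnum, dif_pos hc, Finset.range_orderEmbOfFin]
  ext j
  simp

lemma dSum_submatrix_delSub_apply {n k : ℕ} {α β : Fin k → Fin n} (hα : Function.Injective α)
    (hβ : Function.Injective β) (W A : Matrix (Fin n) (Fin n) ℂ) (i j : Fin n) :
    dSum α β (W.submatrix α β) (delSub A α β) i j =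
      if i ∈ Set.range α ↔ j ∈ Set.range β then (if j ∈ Set.range β then W i j else A i j)
      else 0 := by
  have key {α : Fin k → Fin n} (hα : Function.Injective α) {i : Fin n}
      (h : ¬ ∃ p, α p = i) : ∃ p, complEnum α p = i := by
    have : i ∈ Set.range (complEnum α) := by
      rw [range_complEnum hα]
      exact h
    exact this
  simp only [dSum, delSub, Matrix.of_apply, Matrix.submatrix_apply, Set.mem_range]
  by_cases hi : ∃ p, α p = i <;> by_cases hj : ∃ q, β q = j
  · rw [dif_pos hi, dif_pos hj, Classical.choose_spec hi, Classical.choose_spec hj]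
    simp only [hi, hj, if_true]
  · simp only [hi, hj, dite_true, dite_false, iff_false, not_true, if_false]
  · simp only [hi, hj, dite_true, dite_false, false_iff, not_true, if_false]
  · have hi' := key hα hi
    have hj' := key hβ hj
    rw [dif_neg hi, dif_neg hj, dif_pos hi', dif_pos hj', Classical.choose_spec hi',
      Classical.choose_spec hj']
    simp only [hi, hj, if_true, if_false]

/-- Laplace-type expansion: split an immanant according to the rows meeting the columns `β`. -/
lemma imm_eq_sum_mask {n k : ℕ} (χ : Equiv.Perm (Fin n) → ℂ) {β : Fin k → Fin n}
    (hβ : Function.Injective β) (R : Matrix (Fin n) (Fin n) ℂ) :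
    imm χ R = ∑ α ∈ Qset k n, imm χ (Matrix.of fun i j =>
      if i ∈ Set.range α ↔ j ∈ Set.range β then R i j else 0) := by
  simp only [imm, Matrix.of_apply]
  rw [Finset.sum_comm]
  refine Finset.sum_congr rfl fun τ _ => ?_
  rw [← Finset.mul_sum]
  congr 1
  obtain ⟨σ, hσ⟩ := exists_perm_strictMono_comp (τ.symm.injective.comp hβ)
  have hr (i : Fin n) : i ∈ Set.range ((τ.symm ∘ β) ∘ σ) ↔ τ i ∈ Set.range β := by
    rw [σ.surjective.range_comp]
    simp [Equiv.symm_apply_eq]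
  rw [Finset.sum_eq_single_of_mem _ (mem_Qset.2 hσ)]
  · exact Finset.prod_congr rfl fun i _ => (if_pos (hr i)).symm
  · intro α hα hne
    have : ∃ i, ¬ (i ∈ Set.range α ↔ τ i ∈ Set.range β) := by
      by_contra! hcon
      refine hne (((mem_Qset.1 hα).range_inj hσ).1 (Set.ext fun i => ?_))
      rw [hr, hcon]
    obtain ⟨i, hi⟩ := this
    exact Finset.prod_eq_zero (Finset.mem_univ i) (if_neg hi)

lemma imm_replCols_comp_perm_eq_sum {n k : ℕ} (χ : Equiv.Perm (Fin n) → ℂ)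
    (A : Matrix (Fin n) (Fin n) ℂ) (X : Fin k → Matrix (Fin n) (Fin n) ℂ)
    {β : Fin k → Fin n} (hβ : Function.Injective β) (σ : Equiv.Perm (Fin k)) :
    imm χ (replCols A β (X ∘ σ)) = ∑ α ∈ Qset k n,
      imm χ (dSum α β ((zRepl β σ X).submatrix α β) (delSub A α β)) := by
  rw [imm_eq_sum_mask χ hβ]
  refine Finset.sum_congr rfl fun α hα => ?_
  congr 1
  ext i j
  rw [dSum_submatrix_delSub_apply (mem_Qset.1 hα).injective hβ, Matrix.of_apply]
  refine if_congr Iff.rfl ?_ rfl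
  by_cases hj : ∃ q, β q = j
  · simp only [replCols, zRepl, Set.mem_range, Matrix.of_apply, dif_pos hj, if_pos hj,
      Function.comp_apply]
  · simp only [replCols, Set.mem_range, Matrix.of_apply, dif_neg hj, if_neg hj]

lemma zRepl_const_submatrix {n k : ℕ} (α β : Fin k → Fin n) (σ : Equiv.Perm (Fin k))
    (Y : Matrix (Fin n) (Fin n) ℂ) :
    (zRepl β σ fun _ => Y).submatrix α β = Y.submatrix α β := by
  ext p q
  simp [zRepl]

lemma iteratedFDeriv_imm_eq_sum_dSum {n k : ℕ} (χ : Equiv.Perm (Fin n) → ℂ)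
    (A : Matrix (Fin n) (Fin n) ℂ) (X : Fin k → Matrix (Fin n) (Fin n) ℂ) :
    iteratedFDeriv ℂ k (imm χ) A X =
      ∑ σ : Equiv.Perm (Fin k), ∑ α ∈ Qset k n, ∑ β ∈ Qset k n,
        imm χ (dSum α β ((zRepl β σ X).submatrix α β) (delSub A α β)) := by
  rw [iteratedFDeriv_imm, sum_embedding_eq_sum_perm_Qset fun e => imm χ (replCols A e X)]
  refine Finset.sum_congr rfl fun σ _ => ?_
  rw [Finset.sum_comm]
  refine Finset.sum_congr rfl fun β hβ => ?_
  have hβ := (mem_Qset.1 hβ).injective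
  rw [replCols_comp_perm A hβ, imm_replCols_comp_perm_eq_sum χ A X hβ]

/-- Second formula. For `1 ≤ k ≤ n`,
`D^k d_χ(A)(X^1,…,X^k) = ∑_{σ ∈ S_k} ∑_{α,β ∈ Q_{k,n}} d_χ(X^σ_β[α|β] ⊕_{α|β} A(α|β))`;
in particular
`D^k d_χ(A)(X,…,X) = k! ∑_{α,β ∈ Q_{k,n}} d_χ(X[α|β] ⊕_{α|β} A(α|β))`. -/
theorem immanant_higher_deriv_second_expression (n k : ℕ) (hk : 1 ≤ k) (hkn : k ≤ n)
    (χ : Equiv.Perm (Fin n) → ℂ) (A : Matrix (Fin n) (Fin n) ℂ)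
    (X : Fin k → Matrix (Fin n) (Fin n) ℂ) :
    (iteratedFDeriv ℂ k (imm χ) A (fun i => X i) =
      ∑ σ : Equiv.Perm (Fin k), ∑ α ∈ Qset k n, ∑ β ∈ Qset k n,
        imm χ (dSum α β ((zRepl β σ X).submatrix α β) (delSub A α β))) ∧
    ∀ Y : Matrix (Fin n) (Fin n) ℂ,
      iteratedFDeriv ℂ k (imm χ) A (fun _ => Y) =
        (k.factorial : ℂ) * ∑ α ∈ Qset k n, ∑ β ∈ Qset k n,
          imm χ (dSum α β (Y.submatrix α β) (delSub A α β)) := by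
  refine ⟨iteratedFDeriv_imm_eq_sum_dSum χ A X, fun Y => ?_⟩
  rw [iteratedFDeriv_imm_eq_sum_dSum]
  simp only [zRepl_const_submatrix, Finset.sum_const, Finset.card_univ, Fintype.card_perm,
    Fintype.card_fin, nsmul_eq_mul]
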